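/- Let σ be a viable and dynamic execution strategy for Γ_Φ. Let s be any scenario and i ∈ {1, …, n}, and suppose that [σ(s)]_{B_i} − [σ(s)]_{A_i} ≤ n. Then, for some h ∈ {0,1}, we have [σ(s)]_{C_i^h} ≤ [σ(s)]_{B_i} + 1. -/

import Mathlib

/-!
Suppose both `C_i⁰` and `C_i¹` come later than `B_i + 1` in `s`. Let `s₁` (resp. `s₀`) be `s` with
both `c_i⁰` and `c_i¹` set to true (resp. false). Up to time `B_i + 1` neither value has been
observed, so a dynamic strategy schedules the same tasks at the same times in all three scenarios
(`dynamic_agree`). In `s₁` viability forces `D_i ≤ B_i + 1`, so `D_i` is scheduled at that same time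
in `s` and in `s₀`. In `s₀` viability forces `D_i ≥ A_i + (n + 2)`, which exceeds `B_i + 1`
because `B_i - A_i ≤ n`: a contradiction.
-/

open Classical

/-- A label over propositional variables `P`: a conjunction of positive or negative
literals over distinct variables, encoded as a partial assignment (`none` means the
variable does not occur in the label). The empty label is `fun _ => none`. -/
abbrev CLabel (P : Type) := P → Option Bool

/-- The empty label `λ`. -/
def emptyLabel (P : Type) : CLabel P := fun _ => none

/-- A scenario `s` satisfies a label `ℓ` (written `s ⊨ ℓ`). -/
def sats {P : Type} (s : P → Bool) (ℓ : CLabel P) : Prop :=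
  ∀ p b, ℓ p = some b → s p = b

/-- A Conditional Simple Temporal Network over tasks `T` and propositional
variables `P`.  A labeled constraint `(X, Y, δ, ℓ)` represents `(Y - X ≤ δ, ℓ)`. -/
structure CSTN (T P : Type) where
  /-- The labeled constraints. -/
  C : Set (T × T × ℝ × CLabel P)
  Cfin : C.Finite
  /-- The label of each task. -/
  L : T → CLabel P
  /-- The observation tasks. -/
  OT : Set T
  /-- The observation task of each propositional variable. -/
  obs : P → T
  obs_mem : ∀ p, obs p ∈ OT
  obs_inj : Function.Injective obs
  obs_surj : ∀ X ∈ OT, ∃ p, obs p = X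
  /-- Restriction WD1. -/
  wd1 : ∀ c ∈ C, ∀ s : P → Bool, sats s c.2.2.2 → sats s (L c.1) ∧ sats s (L c.2.1)

namespace CSTN

variable {T P : Type} (Γ : CSTN T P)

/-- The tasks `𝒯_s` executed in scenario `s` (the tasks of the projection `Γ_s`).
An execution strategy is encoded as a total function `σ : (P → Bool) → T → ℝ`;
the values `σ s X` for `X ∉ 𝒯_s` are irrelevant. -/
def Tasks (s : P → Bool) : Set T := {X | sats s (Γ.L X)}

/-- The history `Hist(t, s, σ)`: the partial scenario recording the values in `s` of
the propositional variables observed strictly before time `t`. -/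
noncomputable def Hist (σ : (P → Bool) → T → ℝ) (t : ℝ) (s : P → Bool) : P → Option Bool :=
  fun p => if Γ.obs p ∈ Γ.Tasks s ∧ σ s (Γ.obs p) < t then some (s p) else none

/-- The execution strategy `σ` is dynamic. -/
def Dynamic (σ : (P → Bool) → T → ℝ) : Prop :=
  ∀ s s' : P → Bool, ∀ X ∈ Γ.Tasks s,
    Γ.Hist σ (σ s X) s = Γ.Hist σ (σ s X) s' → X ∈ Γ.Tasks s' ∧ σ s' X = σ s X

/-- The execution strategy `σ` is viable: in every scenario `s`, the schedule `σ s`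
satisfies all constraints of the projection `Γ_s`. -/
def Viable (σ : (P → Bool) → T → ℝ) : Prop :=
  ∀ s : P → Bool, ∀ c ∈ Γ.C, sats s c.2.2.2 → σ s c.2.1 - σ s c.1 ≤ c.2.2.1

/-- `Γ` is dynamically controllable: it admits a dynamic and viable execution strategy. -/
def DynamicallyControllable : Prop :=
  ∃ σ : (P → Bool) → T → ℝ, Γ.Dynamic σ ∧ Γ.Viable σ

end CSTN

/-! ### The reduction from Q3SAT: the CSTN `Γ_Φ` -/

/-- A literal of the Q3SAT formula: a variable `x i` (`Sum.inl i`) or `y i`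
(`Sum.inr i`) together with its sign (`true` = positive occurrence). -/
abbrev QLit (n : ℕ) := (Fin n ⊕ Fin n) × Bool

/-- A clause `l₁ ∨ l₂ ∨ l₃` of the 3CNF `φ`. -/
abbrev QClause (n : ℕ) := QLit n × QLit n × QLit n

/-- The propositional variables `x i`, `y i`, `c i ⁰`, `c i ¹` of `Γ_Φ` (0-based). -/
inductive PhiVar (n : ℕ) where
  | x (i : Fin n) | y (i : Fin n) | c0 (i : Fin n) | c1 (i : Fin n)
deriving DecidableEq

/-- The tasks of `Γ_Φ` (0-based: paper's `A_i`, `i = 1, …, n+1`, is `A ⟨i-1⟩`). -/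
inductive PhiTask (n : ℕ) where
  | A (i : Fin (n + 1)) | B (i : Fin (n + 1))
  | C0 (i : Fin n) | C1 (i : Fin n) | D (i : Fin n)
  | X (i : Fin n) | Y (i : Fin n)
deriving DecidableEq

/-- The propositional variable on which a literal occurs. -/
def litVar {n : ℕ} (l : QLit n) : PhiVar n :=
  match l.1 with
  | .inl i => .x i
  | .inr i => .y i

/-- The literals of a clause occur on pairwise distinct variables
(so that `ℓ_j = ¬l₁ ∧ ¬l₂ ∧ ¬l₃` is a well-formed label). -/
def GoodClause {n : ℕ} (c : QClause n) : Prop :=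
  litVar c.1 ≠ litVar c.2.1 ∧ litVar c.1 ≠ litVar c.2.2 ∧ litVar c.2.1 ≠ litVar c.2.2

/-- A literal evaluates to true under an assignment. -/
def evalLit {n : ℕ} (s : PhiVar n → Bool) (l : QLit n) : Prop := s (litVar l) = l.2

/-- A clause evaluates to true under an assignment. -/
def evalClause {n : ℕ} (s : PhiVar n → Bool) (c : QClause n) : Prop :=
  evalLit s c.1 ∨ evalLit s c.2.1 ∨ evalLit s c.2.2

/-- The 3CNF `φ` evaluates to true under an assignment. -/
def evalCNF {n m : ℕ} (cl : Fin m → QClause n) (s : PhiVar n → Bool) : Prop :=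
  ∀ j, evalClause s (cl j)

/-- The label consisting of the single literal forcing `p` to `b`. -/
def singleLabel {n : ℕ} (p : PhiVar n) (b : Bool) : CLabel (PhiVar n) :=
  fun q => if q = p then some b else none

/-- The label conjunction of two literals. -/
def pairLabel {n : ℕ} (p : PhiVar n) (bp : Bool) (q : PhiVar n) (bq : Bool) :
    CLabel (PhiVar n) :=
  fun r => if r = p then some bp else if r = q then some bq else none

/-- The label `ℓ_j := ¬l_{j,1} ∧ ¬l_{j,2} ∧ ¬l_{j,3}`, the negation of the clause. -/
def clauseLabel {n : ℕ} (c : QClause n) : CLabel (PhiVar n) :=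
  fun q =>
    if q = litVar c.1 then some (!c.1.2)
    else if q = litVar c.2.1 then some (!c.2.1.2)
    else if q = litVar c.2.2 then some (!c.2.2.2)
    else none

/-- `𝒪(x i) = X i`, `𝒪(y i) = Y i`, `𝒪(c i ⁰) = C i ⁰`, `𝒪(c i ¹) = C i ¹`. -/
def phiObs (n : ℕ) : PhiVar n → PhiTask n
  | .x i => .X i
  | .y i => .Y i
  | .c0 i => .C0 i
  | .c1 i => .C1 i

abbrev PhiCon (n : ℕ) := PhiTask n × PhiTask n × ℝ × CLabel (PhiVar n)

/-- The seven constraints of the `i`-th gadget (as `(X, Y, δ, ℓ)` meaning `Y - X ≤ δ`):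
`(D_i ≤ B_i + 1, c_i⁰ ∧ c_i¹)`, `(D_i ≥ A_i + (n+2), ¬c_i⁰ ∧ ¬c_i¹)`,
`(X_i ≥ A_i + (n+2), λ)`, `(Y_i ≥ X_i + 1, λ)`, `(A_{i+1} ≥ Y_i + 1, λ)`,
`(B_{i+1} ≤ C_i⁰ + (n+4), ¬x_i)`, `(B_{i+1} ≤ C_i¹ + (n+4), x_i)`. -/
def gadget (n : ℕ) (i : Fin n) : Set (PhiCon n) :=
  {(.B i.castSucc, .D i, 1, pairLabel (.c0 i) true (.c1 i) true),
   (.D i, .A i.castSucc, -((n : ℝ) + 2), pairLabel (.c0 i) false (.c1 i) false),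
   (.X i, .A i.castSucc, -((n : ℝ) + 2), emptyLabel _),
   (.Y i, .X i, -1, emptyLabel _),
   (.A i.succ, .Y i, -1, emptyLabel _),
   (.C0 i, .B i.succ, (n : ℝ) + 4, singleLabel (.x i) false),
   (.C1 i, .B i.succ, (n : ℝ) + 4, singleLabel (.x i) true)}

/-- The constraints of `Γ_Φ`: `(B₁ - A₁ ≤ 0, λ)`, the gadget constraints, and the
clause constraints `(B_{n+1} - A_{n+1} ≥ n+1, ℓ_j)` for `j = 1, …, m`. -/
def PhiC (n m : ℕ) (cl : Fin m → QClause n) : Set (PhiCon n) :=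
  insert (.A 0, .B 0, (0 : ℝ), emptyLabel _)
    ((⋃ i : Fin n, gadget n i) ∪
     (⋃ j : Fin m,
       {(.B (Fin.last n), .A (Fin.last n), -((n : ℝ) + 1), clauseLabel (cl j))}))

/-- The CSTN `Γ_Φ` associated to the Q3SAT formula
`Φ = ∃x₁∀y₁ ⋯ ∃xₙ∀yₙ ⋀_{j=1}^m (l_{j,1} ∨ l_{j,2} ∨ l_{j,3})`. -/
def GammaPhi (n m : ℕ) (cl : Fin m → QClause n) : CSTN (PhiTask n) (PhiVar n) where
  C := PhiC n m cl
  Cfin := by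
    apply Set.Finite.insert
    apply Set.Finite.union
    · exact Set.finite_iUnion fun i =>
        (((((((Set.finite_singleton _).insert _).insert _).insert _).insert
          _).insert _).insert _)
    · exact Set.finite_iUnion fun j => Set.finite_singleton _
  L := fun _ => emptyLabel _
  OT := Set.range (phiObs n)
  obs := phiObs n
  obs_mem := fun p => ⟨p, rfl⟩
  obs_inj := by
    intro p q hpq
    cases p <;> cases q <;> simp_all [phiObs]
  obs_surj := fun _ hX => hX
  wd1 := by
    intro c _ s _
    constructor <;> · intro p b hb; simp [emptyLabel] at hb

/-- A dynamic strategy cannot distinguish two scenarios before it observes a variable on which they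
differ: if in `s` all such variables are observed after time `K`, then every task scheduled by time
`K` in one of the two scenarios is scheduled at the same time in the other. -/
theorem dynamic_agree {T P : Type} [Finite T] (Γ : CSTN T P) (hall : ∀ s X, X ∈ Γ.Tasks s)
    (σ : (P → Bool) → T → ℝ) (hdyn : Γ.Dynamic σ) (K : ℝ) (s s' : P → Bool)
    (hK : ∀ p, s p ≠ s' p → K < σ s (Γ.obs p)) (X : T)
    (hX : min (σ s X) (σ s' X) ≤ K) : σ s' X = σ s X := by
  by_contra hne
  -- Take a disagreement at the earliest possible time `t`.
  obtain ⟨Z, ⟨hZK, hZne⟩, hmin⟩ := Set.exists_min_image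
    {Z | min (σ s Z) (σ s' Z) ≤ K ∧ σ s' Z ≠ σ s Z} (fun Z => min (σ s Z) (σ s' Z))
    (Set.toFinite _) ⟨X, hX, hne⟩
  set t := min (σ s Z) (σ s' Z) with ht
  have hbefore : ∀ W, min (σ s W) (σ s' W) < t → σ s' W = σ s W := by
    intro W hW
    by_contra hWne
    exact absurd (hmin W ⟨hW.le.trans hZK, hWne⟩) (not_le.mpr hW)
  -- The two histories at time `t` coincide, so the strategy cannot disagree there.
  have hhist : Γ.Hist σ t s = Γ.Hist σ t s' := by
    funext p
    have hiff : σ s (Γ.obs p) < t ↔ σ s' (Γ.obs p) < t := by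
      constructor <;> intro h
      · rwa [hbefore _ (min_lt_of_left_lt h)]
      · rwa [← hbefore _ (min_lt_of_right_lt h)]
    by_cases h : σ s (Γ.obs p) < t
    · have hp : s p = s' p := by
        by_contra hp
        exact absurd (hK p hp) (not_lt.mpr (h.le.trans hZK))
      simp [CSTN.Hist, hall, h, hiff.mp h, hp]
    · simp [CSTN.Hist, h, mt hiff.mpr h]
  rcases min_choice (σ s Z) (σ s' Z) with h | h
  · rw [← ht] at h
    rw [h] at hhist
    exact hZne (hdyn s s' Z (hall s Z) hhist).2
  · rw [← ht] at h
    rw [h] at hhist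
    exact hZne (hdyn s' s Z (hall s' Z) hhist.symm).2.symm

theorem finite_phiTask (n : ℕ) : Finite (PhiTask n) := by
  let f : PhiTask n → Fin 7 × Fin (n + 1) := fun
    | .A i => (0, i) | .B i => (1, i) | .C0 i => (2, i.castSucc) | .C1 i => (3, i.castSucc)
    | .D i => (4, i.castSucc) | .X i => (5, i.castSucc) | .Y i => (6, i.castSucc)
  refine Finite.of_injective f ?_
  intro a b h
  cases a <;> cases b <;> simp_all [f]

/-- **Lemma 4** (the controller has to schedule `C_i⁰` or `C_i¹` early).
If `σ` is viable and dynamic for `Γ_Φ` and `[σ(s)]_{B_i} - [σ(s)]_{A_i} ≤ n`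
(here `i : Fin n` is the 0-based index of the paper's `i ∈ {1, …, n}`),
then `[σ(s)]_{C_i^h} ≤ [σ(s)]_{B_i} + 1` for some `h ∈ {0,1}`. -/
theorem gammaPhi_schedules_C0_or_C1 (n m : ℕ) (hn : 1 ≤ n) (hm : 1 ≤ m)
    (cl : Fin m → QClause n) (hgood : ∀ j, GoodClause (cl j))
    (σ : (PhiVar n → Bool) → PhiTask n → ℝ)
    (hviable : (GammaPhi n m cl).Viable σ) (hdyn : (GammaPhi n m cl).Dynamic σ)
    (s : PhiVar n → Bool) (i : Fin n)
    (hact : σ s (.B i.castSucc) - σ s (.A i.castSucc) ≤ (n : ℝ)) :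
    ∃ h : Bool, σ s (cond h (.C1 i) (.C0 i)) ≤ σ s (.B i.castSucc) + 1 := by
  by_contra! hlate
  have h0 : σ s (.B i.castSucc) + 1 < σ s (.C0 i) := hlate false
  have h1 : σ s (.B i.castSucc) + 1 < σ s (.C1 i) := hlate true
  have hgad : gadget n i ⊆ PhiC n m cl := fun c hc =>
    Or.inr (Or.inl (Set.mem_iUnion.mpr ⟨i, hc⟩))
  have := finite_phiTask n
  let S : Bool → PhiVar n → Bool := fun b p => if p = .c0 i ∨ p = .c1 i then b else s p
  have hagree : ∀ b Z, min (σ s Z) (σ (S b) Z) ≤ σ s (.B i.castSucc) + 1 →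
      σ (S b) Z = σ s Z := by
    intro b
    refine dynamic_agree (GammaPhi n m cl) (fun _ _ p c h => ?_) σ hdyn _ s (S b) fun p hp => ?_
    · simp [GammaPhi, emptyLabel] at h
    · by_cases hc : p = .c0 i ∨ p = .c1 i
      · rcases hc with rfl | rfl
        exacts [h0, h1]
      · simp [S, hc] at hp
  have hsat : ∀ b, sats (S b) (pairLabel (.c0 i) b (.c1 i) b) := by
    intro b p c h
    simp only [pairLabel] at h
    split_ifs at h <;> simp_all [S]
  have hB := hagree true (.B i.castSucc) (min_le_of_left_le (by linarith))
  have hD1 : σ (S true) (.D i) - σ (S true) (.B i.castSucc) ≤ 1 :=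
    hviable (S true) (.B i.castSucc, .D i, 1, pairLabel (.c0 i) true (.c1 i) true)
      (hgad (by simp [gadget])) (hsat true)
  have hDs := hagree true (.D i) (min_le_of_right_le (by linarith))
  have hD := hagree false (.D i) (min_le_of_left_le (by linarith))
  have hD0 : σ (S false) (.A i.castSucc) - σ (S false) (.D i) ≤ -((n : ℝ) + 2) :=
    hviable (S false) (.D i, .A i.castSucc, -((n : ℝ) + 2), pairLabel (.c0 i) false (.c1 i) false)
      (hgad (by simp [gadget])) (hsat false)
  have hn0 : (0 : ℝ) ≤ n := n.cast_nonneg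
  -- `A_i` precedes `D_i` in the all-false scenario, hence lies in the range of agreement.
  have hA := hagree false (.A i.castSucc) (min_le_of_right_le (by linarith))
  linarith
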